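/- arXiv:1604.04637 — 2 statements merged into one kernel-verified Lean document; each statement's English description precedes it below -/
import Mathlib

section
/- If L ∈ Gr(V,m) satisfies L ∩ int(K) ≠ ∅, then the Grassmann distance to ill-posedness equals the least-violation measure of the alternative system: dist(L,Σ_m) = ν(L). -/
/-!
The lower bound `ν(L) ≤ dist(L, Σ_m)` is duality. If `L'` is ill-posed, choose `u ∈ K* ∩ L'^⊥` with
`|||u|||* = 1`. For `x ∈ L` and `v ∈ L'` one has `⟪u, x⟫ = ⟪u, x - v⟫ ≤ |||x - v|||`, so `u` restricted
to `L` has norm at most `dist(L, L')`; extending that restriction by Hahn-Banach without increasing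
its norm yields `y ∈ L^⊥` with `‖y - u‖* ≤ dist(L, L')`.

For the upper bound, let `u ∈ K*` with `|||u|||* = 1` and `y ∈ L^⊥`, and let `v` be a `|||·|||`-unit
vector with `⟪u, v⟫ = 1`. Pick `p ∉ L` with `⟪u, p⟫ = 1`, taking `p = v` when `v ∉ L`. The shears
`x ↦ x - s⟪u, x⟫p` are injective on `L`, so the images `L_s` form a path of `m`-dimensional
subspaces with `L_0 = L` and `L_1 ⊆ u^⊥`. The last `s ≤ 1` at which `L_s` meets `K` outside `0`
gives an ill-posed subspace: if `s = 1`, then `u` witnesses this, and if `s < 1`, then `L_s` misses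
`int K` and a separating functional does (`exists_ill_shear`). Every `x ∈ L` is within
`|⟪u, x⟫| = |⟪y - u, x⟫| ≤ ‖y - u‖* ‖x‖` of `L_s`: if `v ∉ L` use the image of `x`, and if `v ∈ L`
use `x - ⟪u, x⟫v`, which lies in `L ∩ u^⊥` and hence in every `L_s`.
-/

open Module RealInnerProductSpace

/-- `N` is a norm on the real vector space `V`. -/
structure IsNorm (V : Type*) [AddCommGroup V] [Module ℝ V] (N : V → ℝ) : Prop where
  nonneg : ∀ x, 0 ≤ N x
  eq_zero_iff : ∀ x, N x = 0 ↔ x = 0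
  smul_eq : ∀ (c : ℝ) (x : V), N (c • x) = |c| * N x
  add_le : ∀ x y, N (x + y) ≤ N x + N y

/-- `K` is a regular closed convex cone: closed, convex, a cone, pointed and solid. -/
structure IsRegularCone (V : Type*) [NormedAddCommGroup V] [InnerProductSpace ℝ V]
    (K : Set V) : Prop where
  closed : IsClosed K
  convex : Convex ℝ K
  smul_mem : ∀ ⦃c : ℝ⦄, 0 < c → ∀ ⦃x⦄, x ∈ K → c • x ∈ K
  pointed : K ∩ (-K) = {0}
  solid : (interior K).Nonempty

variable {V : Type*} [NormedAddCommGroup V] [InnerProductSpace ℝ V]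

/-- The dual norm of `N` with respect to the inner product of `V`. -/
noncomputable def dualNorm (N : V → ℝ) (u : V) : ℝ :=
  sSup {r : ℝ | ∃ x : V, N x = 1 ∧ r = ⟪u, x⟫}

/-- The dual cone of `K`. -/
def dualCone (K : Set V) : Set V := {u : V | ∀ x ∈ K, 0 ≤ ⟪u, x⟫}

/-- `dist(L1,L2) = max_{x ∈ L1, x ≠ 0} min_{v ∈ L2} |||x - v||| / ‖x‖`,
with `‖·‖ = N` and `|||·||| = N'`. -/
noncomputable def grDist (N N' : V → ℝ) (L1 L2 : Submodule ℝ V) : ℝ :=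
  sSup {d : ℝ | ∃ x ∈ L1, x ≠ 0 ∧ d = sInf {c : ℝ | ∃ v ∈ L2, c = N' (x - v) / N x}}

/-- `odist(L1,L2) = max_{x ∈ L1, x ≠ 0} inf_{v ∈ L2, v ≠ 0} |||x - v||| / ‖v‖`. -/
noncomputable def grOdist (N N' : V → ℝ) (L1 L2 : Submodule ℝ V) : ℝ :=
  sSup {d : ℝ | ∃ x ∈ L1, x ≠ 0 ∧
    d = sInf {c : ℝ | ∃ v ∈ L2, v ≠ 0 ∧ c = N' (x - v) / N v}}

/-- The set `Σ_m` of ill-posed `m`-dimensional subspaces. -/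
def SigmaIll (K : Set V) (m : ℕ) : Set (Submodule ℝ V) :=
  {L | finrank ℝ L = m ∧ (L : Set V) ∩ K ≠ {0} ∧ (Lᗮ : Set V) ∩ dualCone K ≠ {0}}

/-- `dist(L, Σ_m) = inf_{L' ∈ Σ_m} dist(L, L')`. -/
noncomputable def distToIll (N N' : V → ℝ) (K : Set V) (m : ℕ) (L : Submodule ℝ V) : ℝ :=
  sInf {d : ℝ | ∃ L' ∈ SigmaIll K m, d = grDist N N' L L'}

/-- `odist(Σ_m, L) = inf_{L' ∈ Σ_m} odist(L', L)`. -/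
noncomputable def odistToIll (N N' : V → ℝ) (K : Set V) (m : ℕ) (L : Submodule ℝ V) : ℝ :=
  sInf {d : ℝ | ∃ L' ∈ SigmaIll K m, d = grOdist N N' L' L}

/-- `ν(L) = min {‖y - u‖* : u ∈ K*, y ∈ L^⊥, |||u|||* = 1}`. -/
noncomputable def nu (N N' : V → ℝ) (K : Set V) (L : Submodule ℝ V) : ℝ :=
  sInf {r : ℝ | ∃ u ∈ dualCone K, ∃ y ∈ Lᗮ, dualNorm N' u = 1 ∧ r = dualNorm N (y - u)}

/-- `ν̄(L) = min {|||v - x||| : v ∈ K, x ∈ L, ‖x‖ = 1}`. -/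
noncomputable def nubar (N N' : V → ℝ) (K : Set V) (L : Submodule ℝ V) : ℝ :=
  sInf {r : ℝ | ∃ v ∈ K, ∃ x ∈ L, N x = 1 ∧ r = N' (v - x)}

/-- `λ_v(x) = sup {t : x - t v ∈ K}`. -/
noncomputable def lambdaVec (K : Set V) (v x : V) : ℝ := sSup {t : ℝ | x - t • v ∈ K}

/-- `σ(L) = min_{v ∈ K, |||v||| = 1} max_{x ∈ L, ‖x‖ ≤ 1} λ_v(x)`. -/
noncomputable def sigmaMeas (N N' : V → ℝ) (K : Set V) (L : Submodule ℝ V) : ℝ :=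
  sInf {r : ℝ | ∃ v ∈ K, N' v = 1 ∧
    r = sSup {c : ℝ | ∃ x ∈ L, N x ≤ 1 ∧ c = lambdaVec K v x}}

/-- `Sym(L) = min_{v ∈ K, ‖v‖ = 1} sup {t ≥ 0 : ∃ x ∈ K, ‖x‖ ≤ 1, x + t v ∈ L}`. -/
noncomputable def symMeas (N : V → ℝ) (K : Set V) (L : Submodule ℝ V) : ℝ :=
  sInf {r : ℝ | ∃ v ∈ K, N v = 1 ∧
    r = sSup {t : ℝ | 0 ≤ t ∧ ∃ x ∈ K, N x ≤ 1 ∧ x + t • v ∈ L}}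

/-- The norm `‖·‖_e` induced by the pair `(K, e)`. -/
noncomputable def inducedNorm (K : Set V) (e : V) (x : V) : ℝ :=
  sInf {α : ℝ | 0 ≤ α ∧ x + α • e ∈ K ∧ -x + α • e ∈ K}

/-! ### Norms and dual norms -/

lemma IsNorm.continuous [FiniteDimensional ℝ V] {N : V → ℝ} (hN : IsNorm V N) :
    Continuous N := by
  have h : ConvexOn ℝ Set.univ N := by
    refine ⟨convex_univ, fun x _ y _ a b ha hb _ => ?_⟩
    calc N (a • x + b • y) ≤ N (a • x) + N (b • y) := hN.add_le _ _
      _ = a • N x + b • N y := by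
        rw [hN.smul_eq, hN.smul_eq, abs_of_nonneg ha, abs_of_nonneg hb]; rfl
  exact continuousOn_univ.1 (h.continuousOn isOpen_univ)

lemma IsNorm.pos {N : V → ℝ} (hN : IsNorm V N) {x : V} (hx : x ≠ 0) : 0 < N x :=
  lt_of_le_of_ne (hN.nonneg x) fun h => hx ((hN.eq_zero_iff x).1 h.symm)

lemma IsNorm.neg {N : V → ℝ} (hN : IsNorm V N) (x : V) : N (-x) = N x := by
  have := hN.smul_eq (-1) x
  simpa using this

lemma IsNorm.normalize {N : V → ℝ} (hN : IsNorm V N) {x : V} (hx : x ≠ 0) :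
    N ((N x)⁻¹ • x) = 1 := by
  have := hN.pos hx
  rw [hN.smul_eq, abs_of_pos (by positivity), inv_mul_cancel₀ this.ne']

/-- A continuous function attains its maximum on the unit sphere of any norm. -/
lemma IsNorm.exists_max [FiniteDimensional ℝ V] [Nontrivial V] {N : V → ℝ} (hN : IsNorm V N)
    {f : V → ℝ} (hf : Continuous f) : ∃ v, N v = 1 ∧ ∀ x, N x = 1 → f x ≤ f v := by
  obtain ⟨c, hc, hcN⟩ : ∃ c : ℝ, 0 < c ∧ ∀ x, c * ‖x‖ ≤ N x := by
    obtain ⟨x₀, hx₀, hmin⟩ := (isCompact_sphere (0 : V) 1).exists_isMinOn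
      (NormedSpace.sphere_nonempty.2 zero_le_one) hN.continuous.continuousOn
    have hx₀' : x₀ ≠ 0 := by
      rintro rfl
      simp at hx₀
    refine ⟨N x₀, hN.pos hx₀', fun x => ?_⟩
    rcases eq_or_ne x 0 with rfl | hx
    · simpa using hN.nonneg 0
    have hx' : 0 < ‖x‖ := norm_pos_iff.2 hx
    have h1 : N x₀ ≤ N (‖x‖⁻¹ • x) := hmin (by simp [norm_smul, hx'.ne'])
    rw [hN.smul_eq, abs_of_pos (by positivity), inv_mul_eq_div, le_div_iff₀ hx'] at h1
    exact h1
  have hcpt : IsCompact {x : V | N x = 1} := by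
    refine Metric.isCompact_of_isClosed_isBounded (isClosed_eq hN.continuous continuous_const) ?_
    refine (Metric.isBounded_iff_subset_closedBall 0).2 ⟨1 / c, fun x hx => ?_⟩
    have hx1 : N x = 1 := hx
    rw [mem_closedBall_zero_iff, le_div_iff₀ hc]
    linarith [hcN x, mul_comm c ‖x‖]
  obtain ⟨z, hz⟩ := exists_ne (0 : V)
  obtain ⟨v, hv, hmax⟩ := hcpt.exists_isMaxOn ⟨_, hN.normalize hz⟩ hf.continuousOn
  exact ⟨v, hv, fun x hx => hmax hx⟩

lemma exists_dualNorm_eq [FiniteDimensional ℝ V] [Nontrivial V] {N : V → ℝ} (hN : IsNorm V N)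
    (u : V) : ∃ v, N v = 1 ∧ ⟪u, v⟫ = dualNorm N u := by
  obtain ⟨v, hv, hmax⟩ := hN.exists_max (f := fun x => ⟪u, x⟫) (by fun_prop)
  refine ⟨v, hv, le_antisymm (le_csSup ⟨⟪u, v⟫, ?_⟩ ⟨v, hv, rfl⟩) (csSup_le ⟨_, v, hv, rfl⟩ ?_)⟩
  all_goals
    rintro _ ⟨x, hx, rfl⟩
    exact hmax x hx

lemma inner_le_dualNorm [FiniteDimensional ℝ V] [Nontrivial V] {N : V → ℝ} (hN : IsNorm V N)
    (u x : V) : ⟪u, x⟫ ≤ dualNorm N u * N x := by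
  obtain ⟨v, hv, hmax⟩ := hN.exists_max (f := fun x => ⟪u, x⟫) (by fun_prop)
  rcases eq_or_ne x 0 with rfl | hx
  · simp [(hN.eq_zero_iff 0).2 rfl]
  have h : ⟪u, (N x)⁻¹ • x⟫ ≤ dualNorm N u := by
    refine le_csSup ⟨⟪u, v⟫, ?_⟩ ⟨_, hN.normalize hx, rfl⟩
    rintro _ ⟨x, hx, rfl⟩
    exact hmax x hx
  rwa [inner_smul_right, inv_mul_eq_div, div_le_iff₀ (hN.pos hx)] at h

lemma dualNorm_le [FiniteDimensional ℝ V] [Nontrivial V] {N : V → ℝ} (hN : IsNorm V N)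
    {u : V} {M : ℝ} (h : ∀ x, ⟪u, x⟫ ≤ M * N x) : dualNorm N u ≤ M := by
  obtain ⟨v, hv, hu⟩ := exists_dualNorm_eq hN u
  simpa [← hu, hv] using h v

lemma dualNorm_nonneg [FiniteDimensional ℝ V] [Nontrivial V] {N : V → ℝ} (hN : IsNorm V N)
    (u : V) : 0 ≤ dualNorm N u := by
  obtain ⟨v, hv, hu⟩ := exists_dualNorm_eq hN u
  have h1 := inner_le_dualNorm hN u v
  have h2 := inner_le_dualNorm hN u (-v)
  rw [inner_neg_right, hN.neg] at h2
  rw [hv] at h1 h2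
  linarith

lemma dualNorm_pos [FiniteDimensional ℝ V] [Nontrivial V] {N : V → ℝ} (hN : IsNorm V N)
    {u : V} (hu : u ≠ 0) : 0 < dualNorm N u := by
  have h1 := inner_le_dualNorm hN u u
  have h2 : 0 < ⟪u, u⟫ := real_inner_self_pos.2 hu
  exact pos_of_mul_pos_left (h2.trans_le h1) (hN.nonneg u)

lemma dualNorm_normalize [FiniteDimensional ℝ V] [Nontrivial V] {N : V → ℝ} (hN : IsNorm V N)
    {u : V} (hu : u ≠ 0) : dualNorm N ((dualNorm N u)⁻¹ • u) = 1 := by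
  have hp := dualNorm_pos hN hu
  apply le_antisymm
  · refine dualNorm_le hN fun x => ?_
    rw [real_inner_smul_left, inv_mul_eq_div, div_le_iff₀ hp, one_mul, mul_comm]
    exact inner_le_dualNorm hN u x
  · obtain ⟨v, hv, huv⟩ := exists_dualNorm_eq hN u
    have h := inner_le_dualNorm hN ((dualNorm N u)⁻¹ • u) v
    rwa [real_inner_smul_left, huv, inv_mul_cancel₀ hp.ne', hv, mul_one] at h

/-- Norm duality on a subspace: if `u` has norm at most `M` as a functional on `L`, then `u` is within
dual distance `M` of `L^⊥`. -/
lemma exists_orthogonal_dualNorm_le [FiniteDimensional ℝ V] [Nontrivial V] {N : V → ℝ}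
    (hN : IsNorm V N) (L : Submodule ℝ V) {u : V} {M : ℝ} (hM : 0 ≤ M)
    (h : ∀ x ∈ L, ⟪u, x⟫ ≤ M * N x) : ∃ y ∈ Lᗮ, dualNorm N (y - u) ≤ M := by
  obtain ⟨g, hg, hgN⟩ := exists_extension_of_le_sublinear
    (⟨L, (innerₛₗ ℝ u).domRestrict L⟩ : V →ₗ.[ℝ] ℝ) (fun x => M * N x)
    (fun c hc x => by simp only [hN.smul_eq, abs_of_pos hc]; ring)
    (fun x y => by rw [← mul_add]; exact mul_le_mul_of_nonneg_left (hN.add_le x y) hM)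
    (fun x => h x x.2)
  set w : V := (InnerProductSpace.toDual ℝ V).symm (LinearMap.toContinuousLinearMap g) with hw
  have hwg : ∀ x, ⟪w, x⟫ = g x := fun x => by simp [hw]
  refine ⟨u - w, ?_, dualNorm_le hN fun x => ?_⟩
  · rw [Submodule.mem_orthogonal']
    intro x hx
    rw [inner_sub_left, hwg, sub_eq_zero]
    exact (hg ⟨x, hx⟩).symm
  · have := hgN (-x)
    rw [← hwg, hN.neg, inner_neg_right] at this
    simpa [sub_sub_cancel_left, inner_neg_left] using this

/-! ### The cone and its dual -/

lemma IsRegularCone.zero_mem {K : Set V} (hK : IsRegularCone V K) : (0 : V) ∈ K := by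
  have : (0 : V) ∈ K ∩ (-K) := by rw [hK.pointed]; rfl
  exact this.1

lemma inner_pos_of_mem_interior {K : Set V} {u e : V} (hu : u ∈ dualCone K) (hu0 : u ≠ 0)
    (he : e ∈ interior K) : 0 < ⟪u, e⟫ := by
  have hcont : Continuous fun t : ℝ => e - t • u := by fun_prop
  have hnear : ∀ᶠ t : ℝ in nhds 0, e - t • u ∈ K := by
    have : interior K ∈ nhds (e - (0 : ℝ) • u) := by
      simpa using isOpen_interior.mem_nhds he
    exact (hcont.continuousAt.eventually this).mono fun t ht => interior_subset ht
  obtain ⟨t, ht, ht0⟩ :=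
    ((hnear.filter_mono nhdsWithin_le_nhds).and (self_mem_nhdsWithin (s := Set.Ioi (0 : ℝ)))).exists
  have h := hu _ ht
  rw [inner_sub_right, inner_smul_right] at h
  have : 0 < t * ⟪u, u⟫ := mul_pos ht0 (real_inner_self_pos.2 hu0)
  linarith

/-- A subspace that misses the interior of `K` has a nonzero dual-cone vector in its orthogonal
complement. -/
lemma exists_dualCone_orthogonal [FiniteDimensional ℝ V] {K : Set V} (hK : IsRegularCone V K)
    (L : Submodule ℝ V) (hd : Disjoint (interior K) (L : Set V)) :
    ∃ u ∈ dualCone K, u ∈ Lᗮ ∧ u ≠ 0 := by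
  obtain ⟨f, a, hfa, haf⟩ := geometric_hahn_banach_open hK.convex.interior isOpen_interior
    L.convex hd
  have ha : a ≤ 0 := by simpa using haf 0 L.zero_mem
  have hfL : ∀ x ∈ L, f x = 0 := by
    intro x hx
    by_contra hne
    have := haf (((a - 1) / f x) • x) (L.smul_mem _ hx)
    rw [map_smul, smul_eq_mul, div_mul_cancel₀ _ hne] at this
    linarith
  set u : V := -(InnerProductSpace.toDual ℝ V).symm f with hu
  have huf : ∀ x, ⟪u, x⟫ = - f x := fun x => by simp [hu, inner_neg_left]
  refine ⟨u, fun x hx => ?_, ?_, ?_⟩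
  · have hx' : x ∈ closure (interior K) := by
      rw [hK.convex.closure_interior_eq_closure_of_nonempty_interior hK.solid]
      exact subset_closure hx
    have hcl : IsClosed {x : V | 0 ≤ ⟪u, x⟫} := isClosed_le continuous_const (by fun_prop)
    refine closure_minimal (fun z hz => ?_) hcl hx'
    have := hfa z hz
    simp only [Set.mem_ofPred_eq, huf]
    linarith
  · rw [Submodule.mem_orthogonal']
    intro x hx
    rw [huf, hfL x hx, neg_zero]
  · intro h0
    obtain ⟨z, hz⟩ := hK.solid
    have h1 := hfa z hz
    have h2 := huf z
    rw [h0, inner_zero_left] at h2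
    linarith

/-! ### The path of sheared subspaces -/

/-- The shear `x ↦ x - s ⟪u, x⟫ p`. -/
noncomputable def shear (u p : V) (s : ℝ) : V →ₗ[ℝ] V :=
  LinearMap.id - (innerₛₗ ℝ u).smulRight (s • p)

lemma shear_apply (u p : V) (s : ℝ) (x : V) : shear u p s x = x - (s * ⟪u, x⟫) • p := by
  simp [shear, smul_smul, mul_comm]

/-- When `p ∉ L`, every shear along `p` is injective on `L`. -/
lemma finrank_map_shear [FiniteDimensional ℝ V] (L : Submodule ℝ V) {u p : V} (hp : p ∉ L)
    (s : ℝ) : finrank ℝ (L.map (shear u p s)) = finrank ℝ L := by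
  rw [← LinearMap.range_domRestrict]
  refine LinearMap.finrank_range_of_inj ((injective_iff_map_eq_zero _).2 ?_)
  rintro ⟨x, hx⟩ h0
  have h : x = (s * ⟪u, x⟫) • p := by
    rw [LinearMap.domRestrict_apply, shear_apply, sub_eq_zero] at h0
    exact h0
  rcases eq_or_ne (s * ⟪u, x⟫) 0 with hz | hz
  · rw [hz, zero_smul] at h
    exact Subtype.ext h
  · rw [h] at hx
    exact absurd ((L.smul_mem_iff hz).1 hx) hp

/-- Along the path of shears from `L` into `u^⊥`, some subspace is ill-posed. -/
lemma exists_ill_shear [FiniteDimensional ℝ V] {K : Set V} (hK : IsRegularCone V K)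
    (L : Submodule ℝ V) (hint : ((L : Set V) ∩ interior K).Nonempty) {u p : V}
    (hu : u ∈ dualCone K) (hu0 : u ≠ 0) (hp : p ∉ L) (hup : ⟪u, p⟫ = 1) :
    ∃ s ∈ Set.Icc (0 : ℝ) 1, L.map (shear u p s) ∈ SigmaIll K (finrank ℝ L) := by
  obtain ⟨e, heL, heK⟩ := hint
  -- Any nonzero point can be rescaled to the unit sphere while staying in the cone.
  have key : ∀ s ∈ Set.Icc (0 : ℝ) 1, ∀ x ∈ L, x ≠ 0 → shear u p s x ∈ K →
      ∃ q : ℝ × V, (q ∈ Set.Icc (0 : ℝ) 1 ×ˢ Metric.sphere (0 : V) 1 ∧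
        q.2 ∈ L ∧ q.2 - (q.1 * ⟪u, q.2⟫) • p ∈ K) ∧ q.1 = s := by
    intro s hs x hx hx0 hxK
    have hn : 0 < ‖x‖ := norm_pos_iff.2 hx0
    refine ⟨(s, ‖x‖⁻¹ • x), ⟨⟨hs, by simp [norm_smul, hn.ne']⟩, L.smul_mem _ hx, ?_⟩, rfl⟩
    rw [← shear_apply, map_smul]
    exact hK.smul_mem (by positivity) hxK
  set T : Set (ℝ × V) := {q | q ∈ Set.Icc (0 : ℝ) 1 ×ˢ Metric.sphere (0 : V) 1 ∧
    q.2 ∈ L ∧ q.2 - (q.1 * ⟪u, q.2⟫) • p ∈ K} with hT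
  have hTc : IsCompact T := by
    have hcl : IsClosed {q : ℝ × V | q.2 ∈ L ∧ q.2 - (q.1 * ⟪u, q.2⟫) • p ∈ K} :=
      (L.closed_of_finiteDimensional.preimage continuous_snd).inter
        (hK.closed.preimage (by fun_prop))
    exact (isCompact_Icc.prod (isCompact_sphere (0 : V) 1)).inter_right hcl
  have hTne : T.Nonempty := by
    have he0 : e ≠ 0 := by
      rintro rfl
      simpa using inner_pos_of_mem_interior hu hu0 heK
    obtain ⟨q, hq, -⟩ := key 0 (by simp) e heL he0
      (by simpa [shear_apply] using interior_subset heK)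
    exact ⟨q, hq⟩
  obtain ⟨⟨s, x⟩, hsx, hmax⟩ := hTc.exists_isMaxOn hTne continuous_fst.continuousOn
  obtain ⟨⟨hs, hx1⟩, hxL, hxK⟩ := hsx
  simp only at hs hx1 hxL hxK
  have hx0 : x ≠ 0 := by
    rintro rfl
    simp at hx1
  rw [← shear_apply] at hxK
  refine ⟨s, hs, finrank_map_shear L hp s, fun h => ?_, fun h => ?_⟩
  · have h1 : shear u p s x ∈ ((L.map (shear u p s) : Submodule ℝ V) : Set V) ∩ K :=
      ⟨Submodule.mem_map_of_mem hxL, hxK⟩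
    rw [h] at h1
    have h2 : x = (s * ⟪u, x⟫) • p := by
      rw [Set.mem_singleton_iff, shear_apply, sub_eq_zero] at h1
      exact h1
    rcases eq_or_ne (s * ⟪u, x⟫) 0 with hz | hz
    · rw [hz, zero_smul] at h2
      exact hx0 h2
    · rw [h2] at hxL
      exact hp ((L.smul_mem_iff hz).1 hxL)
  · suffices h' : ∃ u' ∈ dualCone K, u' ∈ (L.map (shear u p s))ᗮ ∧ u' ≠ 0 by
      obtain ⟨u', h1, h2, h3⟩ := h'
      have h4 : u' ∈ ((L.map (shear u p s))ᗮ : Set V) ∩ dualCone K := ⟨h2, h1⟩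
      rw [h] at h4
      exact h3 h4
    rcases hs.2.eq_or_lt with rfl | hs1
    · refine ⟨u, hu, ?_, hu0⟩
      rw [Submodule.mem_orthogonal']
      rintro _ ⟨z, -, rfl⟩
      rw [shear_apply, inner_sub_right, inner_smul_right, hup]
      ring
    · refine exists_dualCone_orthogonal hK _ (Set.disjoint_left.2 ?_)
      rintro _ hzK ⟨z, hzL, rfl⟩
      have hz0 : z ≠ 0 := by
        rintro rfl
        simpa using inner_pos_of_mem_interior hu hu0 hzK
      -- An interior point of `K` would persist for slightly larger parameters.
      have hcont : Continuous fun t : ℝ => shear u p t z := by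
        simp only [shear_apply]
        fun_prop
      have hnear : ∀ᶠ t in nhds s, shear u p t z ∈ interior K :=
        hcont.continuousAt.eventually (isOpen_interior.mem_nhds hzK)
      obtain ⟨t, ht, hst, ht1⟩ := ((hnear.filter_mono nhdsWithin_le_nhds).and
        (Ioo_mem_nhdsGT hs1)).exists
      obtain ⟨q, hq, hqt⟩ := key t ⟨hs.1.trans hst.le, ht1.le⟩ z hzL hz0 (interior_subset ht)
      have : q.1 ≤ s := hmax hq
      linarith

/-! ### The two inequalities -/

lemma sInf_ratio_nonneg {N N' : V → ℝ} (hN : IsNorm V N) (hN' : IsNorm V N')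
    (L : Submodule ℝ V) (x : V) : 0 ≤ sInf {c : ℝ | ∃ v ∈ L, c = N' (x - v) / N x} := by
  refine Real.sInf_nonneg ?_
  rintro _ ⟨v, -, rfl⟩
  exact div_nonneg (hN'.nonneg _) (hN.nonneg _)

lemma sInf_ratio_le {N N' : V → ℝ} (hN : IsNorm V N) (hN' : IsNorm V N')
    {L : Submodule ℝ V} (x : V) {v : V} (hv : v ∈ L) :
    sInf {c : ℝ | ∃ v ∈ L, c = N' (x - v) / N x} ≤ N' (x - v) / N x := by
  refine csInf_le ⟨0, ?_⟩ ⟨v, hv, rfl⟩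
  rintro _ ⟨v, -, rfl⟩
  exact div_nonneg (hN'.nonneg _) (hN.nonneg _)

lemma grDist_nonneg {N N' : V → ℝ} (hN : IsNorm V N) (hN' : IsNorm V N')
    (L L' : Submodule ℝ V) : 0 ≤ grDist N N' L L' := by
  refine Real.sSup_nonneg ?_
  rintro _ ⟨x, -, -, rfl⟩
  exact sInf_ratio_nonneg hN hN' L' x

lemma sInf_ratio_le_grDist [FiniteDimensional ℝ V] [Nontrivial V] {N N' : V → ℝ}
    (hN : IsNorm V N) (hN' : IsNorm V N') (L L' : Submodule ℝ V) {x : V} (hx : x ∈ L)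
    (hx0 : x ≠ 0) : sInf {c : ℝ | ∃ v ∈ L', c = N' (x - v) / N x} ≤ grDist N N' L L' := by
  obtain ⟨v, hv, hmax⟩ := hN.exists_max hN'.continuous
  refine le_csSup ⟨N' v, ?_⟩ ⟨x, hx, hx0, rfl⟩
  rintro _ ⟨z, -, hz, rfl⟩
  refine (sInf_ratio_le hN hN' z L'.zero_mem).trans ?_
  have h := hmax _ (hN.normalize hz)
  rw [hN'.smul_eq, abs_of_pos (inv_pos.2 (hN.pos hz)), inv_mul_eq_div] at h
  rwa [sub_zero]

/-- Each admissible pair `(u, y)` in the definition of `ν(L)` yields an ill-posed subspace at distance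
at most `‖y - u‖*` from `L`. -/
lemma exists_ill_grDist_le [FiniteDimensional ℝ V] [Nontrivial V] {N N' : V → ℝ}
    (hN : IsNorm V N) (hN' : IsNorm V N') {K : Set V} (hK : IsRegularCone V K)
    (L : Submodule ℝ V) (hL : L ≠ ⊤) (hint : ((L : Set V) ∩ interior K).Nonempty)
    {u y : V} (hu : u ∈ dualCone K) (hy : y ∈ Lᗮ) (hu1 : dualNorm N' u = 1) :
    ∃ L' ∈ SigmaIll K (finrank ℝ L), grDist N N' L L' ≤ dualNorm N (y - u) := by
  obtain ⟨v, hv1, huv⟩ := exists_dualNorm_eq hN' u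
  rw [hu1] at huv
  have hu0 : u ≠ 0 := by
    rintro rfl
    simp at huv
  have hle : ∀ x ∈ L, |⟪u, x⟫| ≤ dualNorm N (y - u) * N x := by
    intro x hx
    have hyx : ⟪y, x⟫ = 0 := (Submodule.mem_orthogonal' L y).1 hy x hx
    have h1 := inner_le_dualNorm hN (y - u) x
    have h2 := inner_le_dualNorm hN (y - u) (-x)
    rw [inner_sub_left, hyx] at h1
    rw [inner_neg_right, inner_sub_left, hyx, hN.neg] at h2
    rw [abs_le]
    constructor <;> linarith
  suffices h : ∃ L' ∈ SigmaIll K (finrank ℝ L), ∀ x ∈ L, ∃ z ∈ L', N' (x - z) ≤ |⟪u, x⟫| by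
    obtain ⟨L', hL', h⟩ := h
    refine ⟨L', hL', Real.sSup_le ?_ (dualNorm_nonneg hN _)⟩
    rintro _ ⟨x, hx, hx0, rfl⟩
    obtain ⟨z, hz, hxz⟩ := h x hx
    refine (sInf_ratio_le hN hN' x hz).trans ?_
    rw [div_le_iff₀ (hN.pos hx0)]
    exact hxz.trans (hle x hx)
  by_cases hvL : v ∈ L
  · obtain ⟨w, hw⟩ : ∃ w, w ∉ L := by
      by_contra! h
      exact hL (Submodule.eq_top_iff'.2 h)
    -- Adding an element of `L` to `w` corrects its inner product with `u`.
    have hp : w + (1 - ⟪u, w⟫) • v ∉ L := by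
      rwa [L.add_mem_iff_left (L.smul_mem _ hvL)]
    have hup : ⟪u, w + (1 - ⟪u, w⟫) • v⟫ = 1 := by
      rw [inner_add_right, inner_smul_right, huv]
      ring
    obtain ⟨s, -, hs⟩ := exists_ill_shear hK L hint hu hu0 hp hup
    refine ⟨_, hs, fun x hx => ⟨x - ⟪u, x⟫ • v, ?_, ?_⟩⟩
    · refine ⟨x - ⟪u, x⟫ • v, L.sub_mem hx (L.smul_mem _ hvL), ?_⟩
      have : ⟪u, x - ⟪u, x⟫ • v⟫ = 0 := by
        rw [inner_sub_right, inner_smul_right, huv]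
        ring
      rw [shear_apply, this]
      simp
    · rw [sub_sub_cancel, hN'.smul_eq, hv1, mul_one]
  · obtain ⟨s, hs01, hs⟩ := exists_ill_shear hK L hint hu hu0 hvL huv
    refine ⟨_, hs, fun x hx => ⟨_, Submodule.mem_map_of_mem hx, ?_⟩⟩
    rw [shear_apply, sub_sub_cancel, hN'.smul_eq, hv1, mul_one, abs_mul, abs_of_nonneg hs01.1]
    exact mul_le_of_le_one_left (abs_nonneg _) hs01.2

/-- Each ill-posed subspace `L'` yields an admissible pair `(u, y)` in the definition of `ν(L)`, with
`u` taken from `L'^⊥ ∩ K*`. -/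
lemma exists_pair_le_grDist [FiniteDimensional ℝ V] [Nontrivial V] {N N' : V → ℝ}
    (hN : IsNorm V N) (hN' : IsNorm V N') {K : Set V} {m : ℕ} (L : Submodule ℝ V)
    {L' : Submodule ℝ V} (hL' : L' ∈ SigmaIll K m) :
    ∃ u ∈ dualCone K, ∃ y ∈ Lᗮ, dualNorm N' u = 1 ∧ dualNorm N (y - u) ≤ grDist N N' L L' := by
  obtain ⟨u₀, ⟨hu₀L, hu₀K⟩, hu₀⟩ : ∃ u ∈ (L'ᗮ : Set V) ∩ dualCone K, u ≠ 0 := by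
    by_contra! h
    refine hL'.2.2 (Set.Subset.antisymm h ?_)
    rintro _ rfl
    exact ⟨L'ᗮ.zero_mem, fun x _ => by simp⟩
  set u := (dualNorm N' u₀)⁻¹ • u₀ with hu
  have hu1 : dualNorm N' u = 1 := dualNorm_normalize hN' hu₀
  have huL : u ∈ L'ᗮ := L'ᗮ.smul_mem _ hu₀L
  have huK : u ∈ dualCone K := fun x hx => by
    rw [hu, real_inner_smul_left]
    exact mul_nonneg (inv_nonneg.2 (dualNorm_nonneg hN' _)) (hu₀K x hx)
  obtain ⟨y, hy, hyu⟩ := exists_orthogonal_dualNorm_le hN L (u := u)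
    (grDist_nonneg hN hN' L L') (fun x hx => by
      rcases eq_or_ne x 0 with rfl | hx0
      · simp [(hN.eq_zero_iff 0).2 rfl]
      rw [← div_le_iff₀ (hN.pos hx0)]
      refine le_trans ?_ (sInf_ratio_le_grDist hN hN' L L' hx hx0)
      refine le_csInf ⟨_, 0, L'.zero_mem, rfl⟩ ?_
      rintro _ ⟨v, hv, rfl⟩
      refine div_le_div_of_nonneg_right ?_ (hN.nonneg x)
      have huv : ⟪u, v⟫ = 0 := (Submodule.mem_orthogonal' L' u).1 huL v hv
      have h := inner_le_dualNorm hN' u (x - v)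
      rwa [inner_sub_right, huv, sub_zero, hu1, one_mul] at h)
  exact ⟨u, huK, y, hy, hu1, hyu⟩

lemma exists_dualCone_dualNorm_eq_one [FiniteDimensional ℝ V] [Nontrivial V] {N' : V → ℝ}
    (hN' : IsNorm V N') {K : Set V} (hK : IsRegularCone V K) :
    ∃ u ∈ dualCone K, dualNorm N' u = 1 := by
  have h0 : (0 : V) ∉ interior K := by
    intro h
    -- If `0` were interior, then both `w` and `-w` would lie in `K` for some `w ≠ 0`.
    obtain ⟨ε, hε, hball⟩ := Metric.mem_nhds_iff.1 (mem_interior_iff_mem_nhds.1 h)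
    obtain ⟨z, hz⟩ := exists_ne (0 : V)
    have hn : 0 < ‖z‖ := norm_pos_iff.2 hz
    have hnorm : ‖(ε / 2 / ‖z‖) • z‖ < ε := by
      rw [norm_smul, Real.norm_of_nonneg (by positivity), div_mul_cancel₀ _ hn.ne']
      linarith
    have hmem : (ε / 2 / ‖z‖) • z ∈ K ∩ (-K) :=
      ⟨hball (by simpa using hnorm), hball (by simpa [norm_neg] using hnorm)⟩
    rw [hK.pointed, Set.mem_singleton_iff, smul_eq_zero] at hmem
    rcases hmem with hm | hm
    · have : 0 < ε / 2 / ‖z‖ := by positivity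
      exact this.ne' hm
    · exact hz hm
  obtain ⟨u, hu, -, hu0⟩ := exists_dualCone_orthogonal hK ⊥ (by simpa using h0)
  refine ⟨(dualNorm N' u)⁻¹ • u, fun x hx => ?_, dualNorm_normalize hN' hu0⟩
  rw [real_inner_smul_left]
  exact mul_nonneg (inv_nonneg.2 (dualNorm_nonneg hN' _)) (hu x hx)

/-- If `L ∩ int K ≠ ∅` then `dist(L, Σ_m) = ν(L)`. -/
theorem stmt_0 {V : Type*} [NormedAddCommGroup V] [InnerProductSpace ℝ V]
    [FiniteDimensional ℝ V]
    (N N' : V → ℝ) (hN : IsNorm V N) (hN' : IsNorm V N')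
    (K : Set V) (hK : IsRegularCone V K)
    (m : ℕ) (hm : m < finrank ℝ V)
    (L : Submodule ℝ V) (hL : finrank ℝ L = m)
    (hint : ((L : Set V) ∩ interior K).Nonempty) :
    distToIll N N' K m L = nu N N' K L := by
  have : Nontrivial V := Module.nontrivial_of_finrank_pos (R := ℝ) (by omega)
  have hLtop : L ≠ ⊤ := by
    rintro rfl
    rw [finrank_top] at hL
    omega
  subst hL
  obtain ⟨u₀, hu₀, hu₀1⟩ := exists_dualCone_dualNorm_eq_one hN' hK
  obtain ⟨L₀, hL₀, -⟩ := exists_ill_grDist_le hN hN' hK L hLtop hint hu₀ Lᗮ.zero_mem hu₀1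
  apply le_antisymm
  · refine le_csInf ⟨_, u₀, hu₀, 0, Lᗮ.zero_mem, hu₀1, rfl⟩ ?_
    rintro _ ⟨u, hu, y, hy, hu1, rfl⟩
    obtain ⟨L', hL', hle⟩ := exists_ill_grDist_le hN hN' hK L hLtop hint hu hy hu1
    refine le_trans (csInf_le ⟨0, ?_⟩ ⟨L', hL', rfl⟩) hle
    rintro _ ⟨L', -, rfl⟩
    exact grDist_nonneg hN hN' L L'
  · refine le_csInf ⟨_, L₀, hL₀, rfl⟩ ?_
    rintro _ ⟨L', hL', rfl⟩
    obtain ⟨u, hu, y, hy, hu1, hle⟩ := exists_pair_le_grDist hN hN' L hL'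
    refine le_trans (csInf_le ⟨0, ?_⟩ ⟨u, hu, y, hy, hu1, rfl⟩) hle
    rintro _ ⟨u, -, y, -, -, rfl⟩
    exact dualNorm_nonneg hN _
end

section
/- Let L be a proper linear subspace of V and p ∈ V. Then min_{z∈L} ‖p−z‖ = max{⟨q,p⟩ : q ∈ L^⊥, ‖q‖* = 1}. Furthermore, z̄ ∈ L and q̄ ∈ L^⊥ with ‖q̄‖* = 1 attain these two optimal values if and only if ‖p − z̄‖ = ⟨q̄, p − z̄⟩ = ⟨q̄, p⟩. -/
/-!
Weak duality: for `q ∈ Lᗮ` of dual norm one and `z ∈ L`, `⟪q, p⟫ = ⟪q, p - z⟫ ≤ N (p - z)`.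
The inequality `⟪u, x⟫ ≤ dualNorm N u * N x` requires the supremum defining `dualNorm` to be over a
bounded set, which holds because all norms on a finite-dimensional space are equivalent.

Strong duality: let `d = distTo N L p` be the infimum on the left. The function `distTo N L` is
sublinear, so by Hahn-Banach the functional `t • p ↦ t * d` extends to a functional `⟪q, ·⟫`
dominated by `distTo N L`. Domination forces `q` to vanish on `L` and `dualNorm N q ≤ 1`; when
`d > 0`, the bound `d = ⟪q, p - z⟫ ≤ dualNorm N q * N (p - z)` for all `z ∈ L` forces
`dualNorm N q ≥ 1`. When `d = 0`, a feasible `q` exists since `L` is proper, and weak duality for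
`q` and `-q` gives `⟪q, p⟫ = 0`.

So the maximum is attained at a feasible `q` with `⟪q, p⟫ = d`, and the optimality characterization
follows from weak duality.
-/

open Module RealInnerProductSpace

variable {V : Type*} [NormedAddCommGroup V] [InnerProductSpace ℝ V]

namespace IsNorm

variable {N : V → ℝ} (hN : IsNorm V N)
include hN

lemma pos_s2 {x : V} (hx : x ≠ 0) : 0 < N x :=
  lt_of_le_of_ne (hN.nonneg x) fun h => hx ((hN.eq_zero_iff x).1 h.symm)

lemma smul_inv_eq_one {x : V} (hx : x ≠ 0) : N ((N x)⁻¹ • x) = 1 := by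
  have := hN.pos_s2 hx
  rw [hN.smul_eq, abs_of_pos (inv_pos.2 this), inv_mul_cancel₀ this.ne']

lemma convexOn : ConvexOn ℝ Set.univ N := by
  refine ⟨convex_univ, fun x _ y _ a b ha hb _ => ?_⟩
  refine (hN.add_le _ _).trans_eq ?_
  rw [hN.smul_eq, hN.smul_eq, abs_of_nonneg ha, abs_of_nonneg hb, smul_eq_mul, smul_eq_mul]

variable [FiniteDimensional ℝ V]

lemma continuous_s2 : Continuous N :=
  continuousOn_univ.1 (hN.convexOn.continuousOn isOpen_univ)

/-- The half of the equivalence of norms needed here, from compactness of the unit sphere. -/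
lemma exists_norm_le : ∃ C : ℝ, 0 ≤ C ∧ ∀ x, ‖x‖ ≤ C * N x := by
  rcases subsingleton_or_nontrivial V with h | h
  · exact ⟨0, le_rfl, fun x => by simp [Subsingleton.elim x 0]⟩
  obtain ⟨y, hy, hmin⟩ := (isCompact_sphere (0 : V) 1).exists_isMinOn
    (NormedSpace.sphere_nonempty.2 zero_le_one) hN.continuous_s2.continuousOn
  have hy0 : y ≠ 0 := ne_zero_of_mem_unit_sphere ⟨y, hy⟩
  have hpos := hN.pos_s2 hy0
  refine ⟨(N y)⁻¹, (inv_pos.2 hpos).le, fun x => ?_⟩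
  rcases eq_or_ne x 0 with rfl | hx
  · simpa using mul_nonneg (inv_pos.2 hpos).le (hN.nonneg 0)
  have hx' : 0 < ‖x‖ := norm_pos_iff.2 hx
  have h1 : N y ≤ N (‖x‖⁻¹ • x) := hmin (by simp [norm_smul, hx'.ne'])
  rw [hN.smul_eq, abs_of_pos (inv_pos.2 hx'), inv_mul_eq_div, le_div_iff₀ hx'] at h1
  rwa [inv_mul_eq_div, le_div_iff₀ hpos, mul_comm]

lemma bddAbove (u : V) : BddAbove {r : ℝ | ∃ x : V, N x = 1 ∧ r = ⟪u, x⟫} := by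
  obtain ⟨C, _, hC⟩ := hN.exists_norm_le
  refine ⟨‖u‖ * C, ?_⟩
  rintro _ ⟨x, hx, rfl⟩
  have := hC x
  rw [hx, mul_one] at this
  exact (real_inner_le_norm u x).trans (mul_le_mul_of_nonneg_left this (norm_nonneg u))

lemma inner_le (u x : V) : ⟪u, x⟫ ≤ dualNorm N u * N x := by
  rcases eq_or_ne x 0 with rfl | hx
  · simp [(hN.eq_zero_iff 0).2 rfl]
  have h : ⟪u, (N x)⁻¹ • x⟫ ≤ dualNorm N u :=
    le_csSup (hN.bddAbove u) ⟨_, hN.smul_inv_eq_one hx, rfl⟩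
  rwa [real_inner_smul_right, inv_mul_eq_div, div_le_iff₀ (hN.pos_s2 hx)] at h

omit [FiniteDimensional ℝ V] in
lemma dualNorm_le [Nontrivial V] {u : V} {c : ℝ} (h : ∀ x, ⟪u, x⟫ ≤ c * N x) :
    dualNorm N u ≤ c := by
  obtain ⟨x, hx⟩ := exists_ne (0 : V)
  refine csSup_le ⟨_, _, hN.smul_inv_eq_one hx, rfl⟩ ?_
  rintro _ ⟨y, hy, rfl⟩
  simpa [hy] using h y

lemma dualNorm_smul_le [Nontrivial V] (c : ℝ) (u : V) :
    dualNorm N (c • u) ≤ |c| * dualNorm N u := by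
  refine hN.dualNorm_le fun x => ?_
  -- Moving the scalar onto `x` treats both signs of `c` at once, as `N` is absolutely homogeneous.
  have h := hN.inner_le u (c • x)
  rw [hN.smul_eq, real_inner_smul_right] at h
  rw [real_inner_smul_left]
  linarith

lemma dualNorm_smul [Nontrivial V] {c : ℝ} (hc : c ≠ 0) (u : V) :
    dualNorm N (c • u) = |c| * dualNorm N u := by
  refine (hN.dualNorm_smul_le c u).antisymm ?_
  have h := hN.dualNorm_smul_le c⁻¹ (c • u)
  rwa [inv_smul_smul₀ hc, abs_inv, inv_mul_eq_div, le_div_iff₀ (abs_pos.2 hc), mul_comm] at h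

lemma dualNorm_pos {u : V} (hu : u ≠ 0) : 0 < dualNorm N u := by
  have h := hN.inner_le u u
  have h2 : 0 < ⟪u, u⟫ := real_inner_self_pos.2 hu
  exact pos_of_mul_pos_left (h2.trans_le h) (hN.nonneg u)

end IsNorm

/-- The distance from `x` to the subspace `L`, measured by `N`. -/
noncomputable def distTo (N : V → ℝ) (L : Submodule ℝ V) (x : V) : ℝ :=
  sInf {r : ℝ | ∃ z ∈ L, r = N (x - z)}

namespace IsNorm

variable {N : V → ℝ} (hN : IsNorm V N) (L : Submodule ℝ V)
include hN

lemma distTo_le (x : V) {z : V} (hz : z ∈ L) : distTo N L x ≤ N (x - z) :=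
  csInf_le ⟨0, by rintro _ ⟨z, _, rfl⟩; exact hN.nonneg _⟩ ⟨z, hz, rfl⟩

omit hN in
lemma le_distTo {x : V} {c : ℝ} (h : ∀ z ∈ L, c ≤ N (x - z)) : c ≤ distTo N L x :=
  le_csInf ⟨_, 0, L.zero_mem, rfl⟩ (by rintro _ ⟨z, hz, rfl⟩; exact h z hz)

lemma distTo_nonneg (x : V) : 0 ≤ distTo N L x :=
  le_distTo L fun _ _ => hN.nonneg _

lemma distTo_add_le (x y : V) : distTo N L (x + y) ≤ distTo N L x + distTo N L y := by
  rw [← sub_le_iff_le_add]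
  refine le_distTo L fun z hz => ?_
  rw [sub_le_comm]
  refine le_distTo L fun w hw => ?_
  have h1 := hN.distTo_le L (x + y) (L.add_mem hz hw)
  have h2 := hN.add_le (x - z) (y - w)
  rw [sub_add_sub_comm] at h2
  linarith

lemma distTo_smul_le {c : ℝ} (hc : 0 < c) (x : V) :
    distTo N L (c • x) ≤ c * distTo N L x := by
  rw [← div_le_iff₀' hc]
  refine le_distTo L fun z hz => ?_
  rw [div_le_iff₀' hc]
  have h := hN.distTo_le L (c • x) (L.smul_mem c hz)
  rwa [← smul_sub, hN.smul_eq, abs_of_pos hc] at h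

lemma distTo_smul {c : ℝ} (hc : 0 < c) (x : V) :
    distTo N L (c • x) = c * distTo N L x := by
  refine (hN.distTo_smul_le L hc x).antisymm ?_
  have h := hN.distTo_smul_le L (inv_pos.2 hc) (c • x)
  rwa [inv_smul_smul₀ hc.ne', inv_mul_eq_div, le_div_iff₀' hc] at h

lemma distTo_eq_zero {x : V} (hx : x ∈ L) : distTo N L x = 0 := by
  refine le_antisymm ?_ (hN.distTo_nonneg L x)
  have h := hN.distTo_le L x hx
  rwa [sub_self, (hN.eq_zero_iff 0).2 rfl] at h

variable [FiniteDimensional ℝ V]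

/-- Weak duality. -/
lemma inner_le_distTo {p q : V} (hq : q ∈ Lᗮ) (hq1 : dualNorm N q = 1) :
    ⟪q, p⟫ ≤ distTo N L p := by
  refine le_distTo L fun z hz => ?_
  have h := hN.inner_le q (p - z)
  rwa [hq1, one_mul, inner_sub_right, Submodule.inner_left_of_mem_orthogonal hz hq, sub_zero] at h

/-- The Hahn-Banach step: a norming functional for `p` dominated by `distTo N L`. -/
lemma exists_inner_le {p : V} (hp : 0 < distTo N L p) :
    ∃ q : V, ⟪q, p⟫ = distTo N L p ∧ ∀ x, ⟪q, x⟫ ≤ distTo N L x := by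
  have hp0 : p ≠ 0 := by
    rintro rfl
    exact hp.ne' (hN.distTo_eq_zero L L.zero_mem)
  obtain ⟨g, hg, hgle⟩ := exists_extension_of_le_sublinear
    (LinearPMap.mkSpanSingleton p (distTo N L p) hp0) (distTo N L)
    (fun c hc x => hN.distTo_smul L hc x) (hN.distTo_add_le L) (by
      rintro ⟨x, hx⟩
      obtain ⟨t, rfl⟩ := Submodule.mem_span_singleton.1 hx
      rw [LinearPMap.mkSpanSingleton'_apply, RingHom.id_apply, smul_eq_mul]
      rcases le_or_gt t 0 with ht | ht
      · exact (mul_nonpos_of_nonpos_of_nonneg ht hp.le).trans (hN.distTo_nonneg L _)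
      · exact (hN.distTo_smul L ht p).ge)
  refine ⟨(InnerProductSpace.toDual ℝ V).symm (LinearMap.toContinuousLinearMap g), ?_, fun x => ?_⟩
  · have h := hg ⟨p, Submodule.mem_span_singleton_self p⟩
    rw [LinearPMap.mkSpanSingleton_apply ℝ ℝ] at h
    simpa using h
  · simpa using hgle x

/-- Strong duality, with the maximum attained. -/
lemma exists_inner_eq_distTo (hL : L ≠ ⊤) (p : V) :
    ∃ q ∈ Lᗮ, dualNorm N q = 1 ∧ ⟪q, p⟫ = distTo N L p := by
  obtain ⟨q₀, hq₀, hne⟩ := Submodule.exists_mem_ne_zero_of_ne_bot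
    (mt (Submodule.orthogonal_eq_bot_iff).1 hL)
  have : Nontrivial V := ⟨q₀, 0, hne⟩
  rcases (hN.distTo_nonneg L p).eq_or_lt with hd | hd
  · have hpos := hN.dualNorm_pos hne
    have hmem := Lᗮ.smul_mem (dualNorm N q₀)⁻¹ hq₀
    have hone : dualNorm N ((dualNorm N q₀)⁻¹ • q₀) = 1 := by
      rw [hN.dualNorm_smul (inv_pos.2 hpos).ne', abs_of_pos (inv_pos.2 hpos),
        inv_mul_cancel₀ hpos.ne']
    refine ⟨_, hmem, hone, (hN.inner_le_distTo L hmem hone).antisymm ?_⟩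
    have hneg := hN.inner_le_distTo L (p := p) (Lᗮ.smul_mem (-1) hmem)
      (by rw [hN.dualNorm_smul (by norm_num), hone]; norm_num)
    rw [real_inner_smul_left, ← hd] at hneg
    rw [← hd]
    linarith
  · obtain ⟨q, hqp, hq⟩ := hN.exists_inner_le L hd
    have hqL : q ∈ Lᗮ := by
      rw [Submodule.mem_orthogonal']
      intro z hz
      have h1 := hq z
      have h2 := hq (-z)
      rw [hN.distTo_eq_zero L hz] at h1
      rw [hN.distTo_eq_zero L (L.neg_mem hz), inner_neg_right] at h2
      linarith
    refine ⟨q, hqL, le_antisymm ?_ ?_, hqp⟩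
    · refine hN.dualNorm_le fun x => ?_
      simpa using (hq x).trans (hN.distTo_le L x L.zero_mem)
    · have hq0 : q ≠ 0 := by
        rintro rfl
        rw [inner_zero_left] at hqp
        exact hd.ne hqp
      have hpos := hN.dualNorm_pos hq0
      have h : distTo N L p / dualNorm N q ≤ distTo N L p := by
        refine le_distTo L fun z hz => ?_
        rw [div_le_iff₀' hpos, ← hqp]
        have h := hN.inner_le q (p - z)
        rwa [inner_sub_right, Submodule.inner_left_of_mem_orthogonal hz hqL, sub_zero] at h
      rw [div_le_iff₀' hpos] at h
      exact (le_mul_iff_one_le_left hd).1 h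

lemma distTo_eq_sSup (hL : L ≠ ⊤) (p : V) :
    distTo N L p = sSup {r : ℝ | ∃ q ∈ Lᗮ, dualNorm N q = 1 ∧ r = ⟪q, p⟫} := by
  obtain ⟨q, hq, hq1, hqp⟩ := hN.exists_inner_eq_distTo L hL p
  have h : IsGreatest {r : ℝ | ∃ q ∈ Lᗮ, dualNorm N q = 1 ∧ r = ⟪q, p⟫} (distTo N L p) := by
    refine ⟨⟨q, hq, hq1, hqp.symm⟩, ?_⟩
    rintro _ ⟨q', hq', hq1', rfl⟩
    exact hN.inner_le_distTo L hq' hq1'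
  exact h.csSup_eq.symm

end IsNorm

/-- `min_{z ∈ L} ‖p - z‖ = max {⟨q, p⟩ : q ∈ L^⊥, ‖q‖* = 1}`, together with the
characterization of the pairs attaining both optimal values. -/
theorem stmt_2 {V : Type*} [NormedAddCommGroup V] [InnerProductSpace ℝ V]
    [FiniteDimensional ℝ V]
    (N : V → ℝ) (hN : IsNorm V N)
    (L : Submodule ℝ V) (hL : L ≠ ⊤) (p : V) :
    sInf {r : ℝ | ∃ z ∈ L, r = N (p - z)} =
      sSup {r : ℝ | ∃ q ∈ Lᗮ, dualNorm N q = 1 ∧ r = ⟪q, p⟫} ∧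
    ∀ z ∈ L, ∀ q ∈ Lᗮ, dualNorm N q = 1 →
      ((N (p - z) = sInf {r : ℝ | ∃ z' ∈ L, r = N (p - z')} ∧
          ⟪q, p⟫ = sSup {r : ℝ | ∃ q' ∈ Lᗮ, dualNorm N q' = 1 ∧ r = ⟪q', p⟫}) ↔
        (N (p - z) = ⟪q, p - z⟫ ∧ ⟪q, p - z⟫ = ⟪q, p⟫)) := by
  have hsup := hN.distTo_eq_sSup L hL p
  refine ⟨hsup, fun z hz q hq hq1 => ?_⟩
  have hqz : ⟪q, p - z⟫ = ⟪q, p⟫ := by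
    rw [inner_sub_right, Submodule.inner_left_of_mem_orthogonal hz hq, sub_zero]
  rw [← hsup, ← distTo, hqz]
  have h1 := hN.inner_le_distTo L (p := p) hq hq1
  have h2 := hN.distTo_le L p hz
  constructor
  · rintro ⟨ha, hb⟩
    exact ⟨ha.trans hb.symm, rfl⟩
  · rintro ⟨ha, -⟩
    constructor <;> linarith
end
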